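/- Fix a real R. Let Q₀ be a probability mass function on 𝒳 satisfying E_c^{ML}(R,Q₀) < inf over probability mass functions Q with C(supp(Q)) < R of E_c^{ML}(R,Q) (the infimum over an empty set being +∞), and suppose that for every ℓ ≥ 0 the pair (T̆_ℓ,V̆_ℓ) attains the infimum defining E_c(R,Q_ℓ) and Q_{ℓ+1}(x) = ∑_y T̆_ℓ(y)V̆_ℓ(x|y). Then for every ℓ, E_c(R,Q_ℓ) = E_c^{ML}(R,Q_ℓ), and this sequence is non-increasing and converges to 0 as ℓ → ∞. -/

import Mathlib

/-!
Write `J = T∘V` for a joint distribution, `T` being its output marginal. The difference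
`D(J‖Q∘P) - D(J‖T×Q) = ∑ J log (T/P) =: F(J)` does not involve `Q` and is convex in `J`, so the
objective of `EcML` is the maximum `max (D(J‖Q∘P), R + F(J))` of two convex functions. Moreover
`F(Q'∘P) = -I(Q'∘P)`.

*Equality of the exponents* (`Ec_eq_EcML`). If the capacity over `supp Q` is at least `R`, it is
attained by some `Q'` with `R + F(Q'∘P) ≤ 0` (`exists_of_le_capacity`). A joint distribution with
`D(J‖T×Q) < R` is mixed with `Q'∘P` until the constraint is tight, by the intermediate value
theorem; there `D(·‖Q∘P) = R + F(·)`, which by convexity is at most `R + F(J)`.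

*Monotonicity* (`EcML_marginal_le`). Replacing `Q` by the input marginal of the optimal `J` lowers
`D(J‖Q∘P)` and leaves `F(J)` unchanged. Hence `EcML R (Qs ℓ) P` stays below the infimum over the
inputs with small capacity, and so the capacity over `supp (Qs ℓ)` is at least `R` for every `ℓ`.

*Convergence* (`step`). Supports decrease, so they stabilise, and some fixed `Q'` supported there
has `I(Q'∘P) ≥ R`. Moving the optimal `J` towards `Q'∘P` makes `R + F` strictly smaller than a
positive optimum, so `D(·‖Q∘P)` cannot decrease in that direction. Together with the data-processing
inequality, this first-order condition says that each step increases `∑ Q' log (Qs ℓ)` by at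
least the current exponent. That sum is at most `0`, so the non-increasing exponents tend to `0`.
-/

open scoped BigOperators
open Filter Topology

/-- `f` is a probability mass function on a finite alphabet. -/
def IsPMF {α : Type*} [Fintype α] (f : α → ℝ) : Prop :=
  (∀ a, 0 ≤ f a) ∧ ∑ a, f a = 1

/-- `P` is a discrete memoryless channel from `𝓧` to `𝓨`. -/
def IsChannel {𝓧 𝓨 : Type*} [Fintype 𝓧] [Fintype 𝓨] (P : 𝓧 → 𝓨 → ℝ) : Prop :=
  ∀ x, IsPMF (P x)

/-- `V` is a conditional pmf on `𝓧` given `𝓨`. -/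
def IsCondPMF {𝓧 𝓨 : Type*} [Fintype 𝓧] [Fintype 𝓨] (V : 𝓨 → 𝓧 → ℝ) : Prop :=
  ∀ y, IsPMF (V y)

/-- one term `s·log(s/t)` of a KL divergence, with the conventions
    `0·log(0/t) = 0` and `s·log(s/0) = +∞` for `s > 0`. -/
noncomputable def klTerm (s t : ℝ) : EReal :=
  if s = 0 then 0 else if t = 0 then ⊤ else ((s * Real.log (s / t) : ℝ) : EReal)

/-- `D(T∘V ‖ Q∘P)`. -/
noncomputable def DQP {𝓧 𝓨 : Type*} [Fintype 𝓧] [Fintype 𝓨]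
    (T : 𝓨 → ℝ) (V : 𝓨 → 𝓧 → ℝ) (Q : 𝓧 → ℝ) (P : 𝓧 → 𝓨 → ℝ) : EReal :=
  ∑ y, ∑ x, klTerm (T y * V y x) (Q x * P x y)

/-- `D(T∘V ‖ T×Q)`. -/
noncomputable def DTQ {𝓧 𝓨 : Type*} [Fintype 𝓧] [Fintype 𝓨]
    (T : 𝓨 → ℝ) (V : 𝓨 → 𝓧 → ℝ) (Q : 𝓧 → ℝ) : EReal :=
  ∑ y, ∑ x, klTerm (T y * V y x) (T y * Q x)

/-- Gallager's function `E₀(ρ,Q)` (for `ρ > −1`). -/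
noncomputable def E0 {𝓧 𝓨 : Type*} [Fintype 𝓧] [Fintype 𝓨]
    (ρ : ℝ) (Q : 𝓧 → ℝ) (P : 𝓧 → 𝓨 → ℝ) : ℝ :=
  - Real.log (∑ y, (∑ x, Q x * P x y ^ (1 / (1 + ρ))) ^ (1 + ρ))

/-- The joint distribution `T_ρ∘V_ρ` on `𝓧 × 𝓨` (for `ρ > −1`). -/
noncomputable def Jrho {𝓧 𝓨 : Type*} [Fintype 𝓧] [Fintype 𝓨]
    (ρ : ℝ) (Q : 𝓧 → ℝ) (P : 𝓧 → 𝓨 → ℝ) (x : 𝓧) (y : 𝓨) : ℝ :=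
  Q x * P x y ^ (1 / (1 + ρ)) * (∑ a, Q a * P a y ^ (1 / (1 + ρ))) ^ ρ /
    ∑ y', (∑ a, Q a * P a y' ^ (1 / (1 + ρ))) ^ (1 + ρ)

/-- `max_{x : Q(x) > 0} P(y|x)`. -/
noncomputable def maxP {𝓧 𝓨 : Type*} (Q : 𝓧 → ℝ) (P : 𝓧 → 𝓨 → ℝ) (y : 𝓨) : ℝ :=
  ⨆ x : {x // 0 < Q x}, P x.1 y

/-- `E₀(−1,Q) = −log ∑_y max_{x : Q(x)>0} P(y|x)`. -/
noncomputable def E0m1 {𝓧 𝓨 : Type*} [Fintype 𝓧] [Fintype 𝓨]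
    (Q : 𝓧 → ℝ) (P : 𝓧 → 𝓨 → ℝ) : ℝ :=
  - Real.log (∑ y, maxP Q P y)

/-- `E₀(ρ,Q)` extended to `ρ = −1`. -/
noncomputable def E0full {𝓧 𝓨 : Type*} [Fintype 𝓧] [Fintype 𝓨]
    (ρ : ℝ) (Q : 𝓧 → ℝ) (P : 𝓧 → 𝓨 → ℝ) : ℝ :=
  if ρ = -1 then E0m1 Q P else E0 ρ Q P

/-- `T_{−1}(y) ∝ max_{a : Q(a)>0} P(y|a)`. -/
noncomputable def Tm1 {𝓧 𝓨 : Type*} [Fintype 𝓧] [Fintype 𝓨]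
    (Q : 𝓧 → ℝ) (P : 𝓧 → 𝓨 → ℝ) (y : 𝓨) : ℝ :=
  maxP Q P y / ∑ y', maxP Q P y'

/-- `V` is admissible at `ρ = −1`: `V(x|y) = 0` for every `x` outside
    `argmax_{a : Q(a)>0} P(y|a)`. -/
def AdmissibleAtM1 {𝓧 𝓨 : Type*} [Fintype 𝓧] [Fintype 𝓨]
    (Q : 𝓧 → ℝ) (P : 𝓧 → 𝓨 → ℝ) (V : 𝓨 → 𝓧 → ℝ) : Prop :=
  ∀ y x, ¬ (0 < Q x ∧ ∀ a, 0 < Q a → P a y ≤ P x y) → V y x = 0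

/-- the error exponent `E_e(R,Q)`. -/
noncomputable def Ee {𝓧 𝓨 : Type*} [Fintype 𝓧] [Fintype 𝓨]
    (R : ℝ) (Q : 𝓧 → ℝ) (P : 𝓧 → 𝓨 → ℝ) : EReal :=
  sInf {v | ∃ T : 𝓨 → ℝ, ∃ V : 𝓨 → 𝓧 → ℝ, IsPMF T ∧ IsCondPMF V ∧
    v = DQP T V Q P + max (DTQ T V Q - (R : EReal)) 0}

/-- the ML correct-decoding exponent `E_c^{ML}(R,Q)`. -/
noncomputable def EcML {𝓧 𝓨 : Type*} [Fintype 𝓧] [Fintype 𝓨]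
    (R : ℝ) (Q : 𝓧 → ℝ) (P : 𝓧 → 𝓨 → ℝ) : EReal :=
  sInf {v | ∃ T : 𝓨 → ℝ, ∃ V : 𝓨 → 𝓧 → ℝ, IsPMF T ∧ IsCondPMF V ∧
    v = DQP T V Q P + max ((R : EReal) - DTQ T V Q) 0}

/-- the strict correct-decoding exponent `E_c(R,Q)` (`+∞` if infeasible). -/
noncomputable def Ec {𝓧 𝓨 : Type*} [Fintype 𝓧] [Fintype 𝓨]
    (R : ℝ) (Q : 𝓧 → ℝ) (P : 𝓧 → 𝓨 → ℝ) : EReal :=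
  sInf {v | ∃ T : 𝓨 → ℝ, ∃ V : 𝓨 → 𝓧 → ℝ, IsPMF T ∧ IsCondPMF V ∧
    (R : EReal) ≤ DTQ T V Q ∧ v = DQP T V Q P}

/-- the mutual information `I(Q∘P)`. -/
noncomputable def MI {𝓧 𝓨 : Type*} [Fintype 𝓧] [Fintype 𝓨]
    (Q : 𝓧 → ℝ) (P : 𝓧 → 𝓨 → ℝ) : ℝ :=
  ∑ x, ∑ y, if Q x * P x y = 0 then 0
    else Q x * P x y * Real.log (P x y / ∑ a, Q a * P a y)

/-- the capacity `C(Z)` of the channel restricted to input letters in `Z`. -/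
noncomputable def capacity {𝓧 𝓨 : Type*} [Fintype 𝓧] [Fintype 𝓨]
    (P : 𝓧 → 𝓨 → ℝ) (Z : Set 𝓧) : ℝ :=
  sSup {c | ∃ Q' : 𝓧 → ℝ, IsPMF Q' ∧ (∀ x, 0 < Q' x → x ∈ Z) ∧ c = MI Q' P}

/-- `R_{−1}^{−}(Q)`. -/
noncomputable def Rm1minus {𝓧 𝓨 : Type*} [Fintype 𝓧] [Fintype 𝓨]
    (Q : 𝓧 → ℝ) (P : 𝓧 → 𝓨 → ℝ) : EReal :=
  sInf {v | ∃ V : 𝓨 → 𝓧 → ℝ, IsCondPMF V ∧ AdmissibleAtM1 Q P V ∧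
    v = DTQ (Tm1 Q P) V Q}

/-- `R_{−1}^{+}(Q)`. -/
noncomputable def Rm1plus {𝓧 𝓨 : Type*} [Fintype 𝓧] [Fintype 𝓨]
    (Q : 𝓧 → ℝ) (P : 𝓧 → 𝓨 → ℝ) : EReal :=
  sSup {v | ∃ V : 𝓨 → 𝓧 → ℝ, IsCondPMF V ∧ AdmissibleAtM1 Q P V ∧
    v = DTQ (Tm1 Q P) V Q}

/-- `F_ρ(T∘V, Q) = D(T∘V‖Q∘P) + ρ·D(T∘V‖T×Q)`. -/
noncomputable def Frho {𝓧 𝓨 : Type*} [Fintype 𝓧] [Fintype 𝓨]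
    (ρ : ℝ) (T : 𝓨 → ℝ) (V : 𝓨 → 𝓧 → ℝ) (Q : 𝓧 → ℝ) (P : 𝓧 → 𝓨 → ℝ) : EReal :=
  DQP T V Q P + (ρ : EReal) * DTQ T V Q

/-- the unconstrained penalized minimum
    `min_{T,V} { D(T∘V‖Q∘P) + ρ·(D(T∘V‖T×Q) − R) }`. -/
noncomputable def penMin {𝓧 𝓨 : Type*} [Fintype 𝓧] [Fintype 𝓨]
    (Q : 𝓧 → ℝ) (P : 𝓧 → 𝓨 → ℝ) (R ρ : ℝ) : EReal :=
  sInf {v | ∃ T : 𝓨 → ℝ, ∃ V : 𝓨 → 𝓧 → ℝ, IsPMF T ∧ IsCondPMF V ∧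
    v = DQP T V Q P + (ρ : EReal) * (DTQ T V Q - (R : EReal))}

/-- the support-constrained penalized minimum
    `min_{T,V : supp(V) ⊆ supp(Q)} { D(T∘V‖Q∘P) − ρ·(R − D(T∘V‖T×Q)) }`. -/
noncomputable def penMinS {𝓧 𝓨 : Type*} [Fintype 𝓧] [Fintype 𝓨]
    (Q : 𝓧 → ℝ) (P : 𝓧 → 𝓨 → ℝ) (R ρ : ℝ) : EReal :=
  sInf {v | ∃ T : 𝓨 → ℝ, ∃ V : 𝓨 → 𝓧 → ℝ, IsPMF T ∧ IsCondPMF V ∧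
    (∀ y x, Q x = 0 → V y x = 0) ∧
    v = DQP T V Q P - (ρ : EReal) * ((R : EReal) - DTQ T V Q)}

/-! ### Joint distributions and finite divergences -/

/-- `J y x` is a joint probability mass function on `𝓨 × 𝓧` (output letter first). -/
def IsJoint {𝓧 𝓨 : Type*} [Fintype 𝓧] [Fintype 𝓨] (J : 𝓨 → 𝓧 → ℝ) : Prop :=
  (∀ y x, 0 ≤ J y x) ∧ ∑ y, ∑ x, J y x = 1

/-- `J ≪ Q∘P`: exactly the condition under which `D(J‖Q∘P)` is finite. -/
def SuppIn {𝓧 𝓨 : Type*} (J : 𝓨 → 𝓧 → ℝ) (Q : 𝓧 → ℝ) (P : 𝓧 → 𝓨 → ℝ) : Prop :=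
  ∀ y x, J y x ≠ 0 → Q x ≠ 0 ∧ P x y ≠ 0

/-- The mixture `(1-t)·J + t·K`. -/
def mix {𝓧 𝓨 : Type*} (t : ℝ) (J K : 𝓨 → 𝓧 → ℝ) : 𝓨 → 𝓧 → ℝ :=
  fun y x => (1 - t) * J y x + t * K y x

/-- The negative joint entropy `∑ J log J`. -/
noncomputable def negEnt {𝓧 𝓨 : Type*} [Fintype 𝓧] [Fintype 𝓨] (J : 𝓨 → 𝓧 → ℝ) : ℝ :=
  ∑ y, ∑ x, J y x * Real.log (J y x)

/-- The negative entropy of the `𝓨`-marginal of `J`. -/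
noncomputable def negEntY {𝓧 𝓨 : Type*} [Fintype 𝓧] [Fintype 𝓨] (J : 𝓨 → 𝓧 → ℝ) : ℝ :=
  ∑ y, (∑ x, J y x) * Real.log (∑ x, J y x)

/-- The expectation of `w` under `J`. -/
def lin {𝓧 𝓨 : Type*} [Fintype 𝓧] [Fintype 𝓨] (w J : 𝓨 → 𝓧 → ℝ) : ℝ :=
  ∑ y, ∑ x, J y x * w y x

/-- `D(J‖Q∘P)` as a real number; the value is correct when `SuppIn J Q P`. -/
noncomputable def D1 {𝓧 𝓨 : Type*} [Fintype 𝓧] [Fintype 𝓨]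
    (J : 𝓨 → 𝓧 → ℝ) (Q : 𝓧 → ℝ) (P : 𝓧 → 𝓨 → ℝ) : ℝ :=
  negEnt J - lin (fun _ x => Real.log (Q x)) J - lin (fun y x => Real.log (P x y)) J

/-- `D(J‖T×Q)`, with `T` the `𝓨`-marginal of `J`, as a real number; the value is correct when
`J` is supported in `supp Q`. -/
noncomputable def D2 {𝓧 𝓨 : Type*} [Fintype 𝓧] [Fintype 𝓨]
    (J : 𝓨 → 𝓧 → ℝ) (Q : 𝓧 → ℝ) : ℝ :=
  negEnt J - negEntY J - lin (fun _ x => Real.log (Q x)) J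

/-- `D(J‖Q∘P) - D(J‖T×Q) = ∑ J log (T/P)`, a quantity free of `Q` and convex in `J`. -/
noncomputable def FF {𝓧 𝓨 : Type*} [Fintype 𝓧] [Fintype 𝓨]
    (J : 𝓨 → 𝓧 → ℝ) (P : 𝓧 → 𝓨 → ℝ) : ℝ :=
  negEntY J - lin (fun y x => Real.log (P x y)) J

lemma suppIn_mix {𝓧 𝓨 : Type*} {J K : 𝓨 → 𝓧 → ℝ} {Q : 𝓧 → ℝ} {P : 𝓧 → 𝓨 → ℝ} (hJ : SuppIn J Q P)
    (hK : SuppIn K Q P) (t : ℝ) : SuppIn (mix t J K) Q P := by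
  intro y x h
  by_cases h1 : J y x = 0
  · by_cases h2 : K y x = 0
    · simp [mix, h1, h2] at h
    · exact hK y x h2
  · exact hJ y x h1

lemma suppIn_QP {𝓧 𝓨 : Type*} {Q Q' : 𝓧 → ℝ} (P : 𝓧 → 𝓨 → ℝ) (h : ∀ x, Q' x ≠ 0 → 0 < Q x) :
    SuppIn (fun y x => Q' x * P x y) Q P := fun _ x hne =>
  ⟨(h x (left_ne_zero_of_mul hne)).ne', right_ne_zero_of_mul hne⟩

section Aux

variable {𝓧 𝓨 : Type*} [Fintype 𝓧] [Fintype 𝓨]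

lemma D1_sub_D2 (J : 𝓨 → 𝓧 → ℝ) (Q : 𝓧 → ℝ) (P : 𝓧 → 𝓨 → ℝ) :
    D1 J Q P - D2 J Q = FF J P := by
  unfold D1 D2 FF; ring

/-! ### Extended-real divergences as real sums -/

lemma klTerm_of {s t : ℝ} (h : s ≠ 0 → t ≠ 0) :
    klTerm s t = ((s * Real.log (s / t) : ℝ) : EReal) := by
  unfold klTerm
  by_cases hs : s = 0
  · simp [hs]
  · simp [hs, h hs]

lemma klTerm_ne_bot (s t : ℝ) : klTerm s t ≠ ⊥ := by
  unfold klTerm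
  split_ifs
  · simp
  · simp
  · exact EReal.coe_ne_bot _

lemma ereal_sum_ne_bot {ι : Type*} (s : Finset ι) (f : ι → EReal) (h : ∀ i ∈ s, f i ≠ ⊥) :
    ∑ i ∈ s, f i ≠ ⊥ := by
  classical
  induction s using Finset.induction_on with
  | empty => simp
  | insert a s ha ih =>
    rw [Finset.sum_insert ha]
    rw [Ne, EReal.add_eq_bot_iff, not_or]
    exact ⟨h a (by simp), ih fun i hi => h i (by simp [hi])⟩

lemma ereal_sum_eq_top {ι : Type*} (s : Finset ι) (f : ι → EReal) (h : ∀ i ∈ s, f i ≠ ⊥)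
    (i : ι) (hi : i ∈ s) (ht : f i = ⊤) : ∑ i ∈ s, f i = ⊤ := by
  classical
  rw [← Finset.add_sum_erase s f hi, ht]
  exact EReal.top_add_of_ne_bot (ereal_sum_ne_bot _ _ fun j hj => h j (Finset.mem_of_mem_erase hj))

lemma coe_sum2 (f : 𝓨 → 𝓧 → ℝ) :
    ((∑ y, ∑ x, f y x : ℝ) : EReal) = ∑ y, ∑ x, (f y x : EReal) := by
  have key : ∀ {ι : Type _} (s : Finset ι) (g : ι → ℝ),
      ((∑ i ∈ s, g i : ℝ) : EReal) = ∑ i ∈ s, (g i : EReal) := fun s g =>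
    map_sum (⟨⟨fun r : ℝ => (r : EReal), rfl⟩, EReal.coe_add⟩ : ℝ →+ EReal) g s
  have key' : ∀ {ι : Type _} (s : Finset ι) (g : ι → ℝ),
      ((∑ i ∈ s, g i : ℝ) : EReal) = ∑ i ∈ s, (g i : EReal) := fun s g =>
    map_sum (⟨⟨fun r : ℝ => (r : EReal), rfl⟩, EReal.coe_add⟩ : ℝ →+ EReal) g s
  rw [key]
  exact Finset.sum_congr rfl fun y _ => key' _ _

lemma DQP_eq_top {T : 𝓨 → ℝ} {V : 𝓨 → 𝓧 → ℝ} {Q : 𝓧 → ℝ} {P : 𝓧 → 𝓨 → ℝ}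
    (h : ¬ SuppIn (fun y x => T y * V y x) Q P) : DQP T V Q P = ⊤ := by
  unfold SuppIn at h
  push Not at h
  obtain ⟨y, x, h1, h2⟩ := h
  have h0 : Q x * P x y = 0 := by
    by_cases hq : Q x = 0
    · simp [hq]
    · simp [h2 hq]
  unfold DQP
  refine ereal_sum_eq_top _ _ (fun i _ => ereal_sum_ne_bot _ _ fun j _ => klTerm_ne_bot _ _) y
    (Finset.mem_univ _) ?_
  refine ereal_sum_eq_top _ _ (fun i _ => klTerm_ne_bot _ _) x (Finset.mem_univ _) ?_
  simp only [klTerm, h0]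
  simp [h1]

lemma DQP_eq {T : 𝓨 → ℝ} {V : 𝓨 → 𝓧 → ℝ} {Q : 𝓧 → ℝ} {P : 𝓧 → 𝓨 → ℝ}
    (h : SuppIn (fun y x => T y * V y x) Q P) :
    DQP T V Q P = (D1 (fun y x => T y * V y x) Q P : ℝ) := by
  unfold DQP D1 negEnt lin
  simp only [← Finset.sum_sub_distrib]
  rw [coe_sum2]
  refine Finset.sum_congr rfl fun y _ => Finset.sum_congr rfl fun x _ => ?_
  have hh := h y x
  rw [klTerm_of (fun h0 => mul_ne_zero (hh h0).1 (hh h0).2)]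
  congr 1
  by_cases h0 : T y * V y x = 0
  · simp [h0]
  · rw [Real.log_div h0 (mul_ne_zero (hh h0).1 (hh h0).2), Real.log_mul (hh h0).1 (hh h0).2]
    ring

lemma DTQ_eq {T : 𝓨 → ℝ} {V : 𝓨 → 𝓧 → ℝ} {Q : 𝓧 → ℝ} {P : 𝓧 → 𝓨 → ℝ} (hV : IsCondPMF V)
    (h : SuppIn (fun y x => T y * V y x) Q P) :
    DTQ T V Q = (D2 (fun y x => T y * V y x) Q : ℝ) := by
  have hm : ∀ y, ∑ x, T y * V y x = T y := fun y => by
    rw [← Finset.mul_sum, (hV y).2, mul_one]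
  have hM : negEntY (fun y x => T y * V y x) = ∑ y, ∑ x, T y * V y x * Real.log (T y) := by
    unfold negEntY
    refine Finset.sum_congr rfl fun y _ => ?_
    rw [← Finset.sum_mul, hm]
  unfold DTQ D2
  rw [hM]
  unfold negEnt lin
  simp only [← Finset.sum_sub_distrib]
  rw [coe_sum2]
  refine Finset.sum_congr rfl fun y _ => Finset.sum_congr rfl fun x _ => ?_
  have hh := h y x
  have hT : T y * V y x ≠ 0 → T y ≠ 0 := fun h0 => left_ne_zero_of_mul h0
  rw [klTerm_of (fun h0 => mul_ne_zero (hT h0) (hh h0).1)]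
  congr 1
  by_cases h0 : T y * V y x = 0
  · simp [h0]
  · rw [Real.log_div h0 (mul_ne_zero (hT h0) (hh h0).1), Real.log_mul (hT h0) (hh h0).1]
    ring

lemma isJoint_mul {T : 𝓨 → ℝ} {V : 𝓨 → 𝓧 → ℝ} (hT : IsPMF T) (hV : IsCondPMF V) :
    IsJoint (fun y x => T y * V y x) := by
  refine ⟨fun y x => mul_nonneg (hT.1 y) ((hV y).1 x), ?_⟩
  simp only [← Finset.mul_sum, (hV _).2, mul_one, hT.2]

lemma exists_factor [Nonempty 𝓧] {J : 𝓨 → 𝓧 → ℝ} (hJ : IsJoint J) :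
    ∃ T : 𝓨 → ℝ, ∃ V : 𝓨 → 𝓧 → ℝ, IsPMF T ∧ IsCondPMF V ∧ (fun y x => T y * V y x) = J := by
  classical
  obtain ⟨x0⟩ := ‹Nonempty 𝓧›
  refine ⟨fun y => ∑ x, J y x, fun y x => if ∑ x, J y x = 0 then (if x = x0 then 1 else 0)
    else J y x / ∑ x, J y x, ⟨fun y => Finset.sum_nonneg fun x _ => hJ.1 y x, hJ.2⟩, ?_, ?_⟩
  · intro y
    by_cases h : ∑ x, J y x = 0
    · simp only [h, if_true]
      refine ⟨fun x => by dsimp only; split_ifs <;> norm_num, by simp⟩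
    · simp only [h, if_false]
      refine ⟨fun x => div_nonneg (hJ.1 y x) (Finset.sum_nonneg fun x _ => hJ.1 y x), ?_⟩
      rw [← Finset.sum_div, div_self h]
  · funext y x
    by_cases h : ∑ x, J y x = 0
    · have := (Finset.sum_eq_zero_iff_of_nonneg (fun x _ => hJ.1 y x)).1 h x (Finset.mem_univ _)
      simp [h, this]
    · simp only [h, if_false]
      field_simp

/-! ### The exponents in terms of joint distributions -/

/-- The objective of `EcML` is the maximum of two convex functions of the joint distribution. -/
lemma obj_eq {T : 𝓨 → ℝ} {V : 𝓨 → 𝓧 → ℝ} {Q : 𝓧 → ℝ} {P : 𝓧 → 𝓨 → ℝ} (R : ℝ)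
    (hV : IsCondPMF V) (h : SuppIn (fun y x => T y * V y x) Q P) :
    DQP T V Q P + max ((R : EReal) - DTQ T V Q) 0 =
      ((max (D1 (fun y x => T y * V y x) Q P) (R + FF (fun y x => T y * V y x) P) : ℝ) : EReal) := by
  rw [DQP_eq h, DTQ_eq hV h, ← D1_sub_D2 _ Q, ← EReal.coe_sub, ← EReal.coe_zero,
    ← EReal.coe_strictMono.monotone.map_max, ← EReal.coe_add]
  congr 1
  rw [← max_add_add_left, add_zero, max_comm]
  congr 1
  ring

lemma EcML_le [Nonempty 𝓧] {J : 𝓨 → 𝓧 → ℝ} {Q : 𝓧 → ℝ} {P : 𝓧 → 𝓨 → ℝ} (R : ℝ)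
    (hJ : IsJoint J) (h : SuppIn J Q P) :
    EcML R Q P ≤ ((max (D1 J Q P) (R + FF J P) : ℝ) : EReal) := by
  obtain ⟨T, V, hT, hV, rfl⟩ := exists_factor hJ
  exact sInf_le ⟨T, V, hT, hV, (obj_eq R hV h).symm⟩

lemma Ec_le [Nonempty 𝓧] {J : 𝓨 → 𝓧 → ℝ} {Q : 𝓧 → ℝ} {P : 𝓧 → 𝓨 → ℝ} {R : ℝ}
    (hJ : IsJoint J) (h : SuppIn J Q P) (hR : R ≤ D2 J Q) :
    Ec R Q P ≤ (D1 J Q P : EReal) := by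
  obtain ⟨T, V, hT, hV, rfl⟩ := exists_factor hJ
  refine sInf_le ⟨T, V, hT, hV, ?_, (DQP_eq h).symm⟩
  rw [DTQ_eq hV h]
  exact_mod_cast hR

lemma EcML_le_Ec (R : ℝ) (Q : 𝓧 → ℝ) (P : 𝓧 → 𝓨 → ℝ) : EcML R Q P ≤ Ec R Q P := by
  refine le_sInf ?_
  rintro v ⟨T, V, hT, hV, hR, rfl⟩
  by_cases h : SuppIn (fun y x => T y * V y x) Q P
  · refine sInf_le ⟨T, V, hT, hV, ?_⟩
    rw [obj_eq R hV h, DQP_eq h]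
    rw [DTQ_eq hV h] at hR
    have hR' : R ≤ D2 (fun y x => T y * V y x) Q := by exact_mod_cast hR
    rw [max_eq_left]
    have := D1_sub_D2 (fun y x => T y * V y x) Q P
    linarith
  · rw [DQP_eq_top h]
    exact le_top

/-! ### Gibbs inequalities -/

/-- Termwise Gibbs inequality. -/
lemma gibbs_term {p q : ℝ} (hp : 0 ≤ p) (hq : 0 ≤ q) (h : q = 0 → p = 0) :
    p * Real.log q ≤ p * Real.log p + (q - p) := by
  rcases hp.eq_or_lt with rfl | hp
  · simpa using hq
  · have hq' : 0 < q := lt_of_le_of_ne hq fun e => hp.ne' (h e.symm)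
    have h1 := Real.log_le_sub_one_of_pos (div_pos hq' hp)
    rw [Real.log_div hq'.ne' hp.ne'] at h1
    have h2 := mul_le_mul_of_nonneg_left h1 hp.le
    have h3 : p * (q / p - 1) = q - p := by field_simp
    nlinarith

lemma gibbs {p q : 𝓧 → ℝ} (hp : IsPMF p) (hq : IsPMF q) (h : ∀ x, q x = 0 → p x = 0) :
    ∑ x, p x * Real.log (q x) ≤ ∑ x, p x * Real.log (p x) := by
  have := Finset.sum_le_sum fun x (_ : x ∈ Finset.univ) => gibbs_term (hp.1 x) (hq.1 x) (h x)
  rw [Finset.sum_add_distrib, Finset.sum_sub_distrib, hp.2, hq.2] at this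
  linarith

lemma gibbs_joint {J K : 𝓨 → 𝓧 → ℝ} (hJ : IsJoint J) (hK : IsJoint K)
    (h : ∀ y x, K y x = 0 → J y x = 0) :
    lin (fun y x => Real.log (K y x)) J ≤ negEnt J := by
  have := Finset.sum_le_sum fun y (_ : y ∈ Finset.univ) =>
    Finset.sum_le_sum fun x (_ : x ∈ Finset.univ) =>
      gibbs_term (hJ.1 y x) (hK.1 y x) (h y x)
  simp only [Finset.sum_add_distrib, Finset.sum_sub_distrib, hJ.2, hK.2] at this
  unfold lin negEnt
  linarith

lemma isJoint_QP {Q : 𝓧 → ℝ} {P : 𝓧 → 𝓨 → ℝ} (hQ : IsPMF Q) (hP : IsChannel P) :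
    IsJoint (fun y x => Q x * P x y) := by
  refine ⟨fun y x => mul_nonneg (hQ.1 x) ((hP x).1 y), ?_⟩
  rw [Finset.sum_comm]
  simp only [← Finset.mul_sum, (hP _).2, mul_one, hQ.2]

lemma D1_nonneg {J : 𝓨 → 𝓧 → ℝ} {Q : 𝓧 → ℝ} {P : 𝓧 → 𝓨 → ℝ} (hQ : IsPMF Q)
    (hP : IsChannel P) (hJ : IsJoint J) (h : SuppIn J Q P) : 0 ≤ D1 J Q P := by
  have h1 := gibbs_joint hJ (isJoint_QP hQ hP) (fun y x h0 => by
    by_contra hne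
    exact mul_ne_zero (h y x hne).1 (h y x hne).2 h0)
  have h2 : lin (fun y x => Real.log (Q x * P x y)) J =
      lin (fun _ x => Real.log (Q x)) J + lin (fun y x => Real.log (P x y)) J := by
    unfold lin
    simp only [← Finset.sum_add_distrib]
    refine Finset.sum_congr rfl fun y _ => Finset.sum_congr rfl fun x _ => ?_
    by_cases h0 : J y x = 0
    · simp [h0]
    · rw [Real.log_mul (h y x h0).1 (h y x h0).2, mul_add]
  unfold D1
  linarith

/-! ### Mixtures: convexity and continuity -/

lemma lin_mix (w J K : 𝓨 → 𝓧 → ℝ) (t : ℝ) :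
    lin w (mix t J K) = (1 - t) * lin w J + t * lin w K := by
  unfold lin mix
  simp only [Finset.mul_sum, ← Finset.sum_add_distrib]
  refine Finset.sum_congr rfl fun y _ => Finset.sum_congr rfl fun x _ => ?_
  ring

lemma isJoint_mix {J K : 𝓨 → 𝓧 → ℝ} (hJ : IsJoint J) (hK : IsJoint K) {t : ℝ}
    (h0 : 0 ≤ t) (h1 : t ≤ 1) : IsJoint (mix t J K) := by
  refine ⟨fun y x => add_nonneg (mul_nonneg (by linarith) (hJ.1 y x))
    (mul_nonneg h0 (hK.1 y x)), ?_⟩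
  have := lin_mix (fun _ _ => 1) J K t
  simp only [lin, mul_one, hJ.2, hK.2] at this
  linarith

lemma FF_mix_le {J K : 𝓨 → 𝓧 → ℝ} (P : 𝓧 → 𝓨 → ℝ) (hJ : IsJoint J) (hK : IsJoint K) {t : ℝ}
    (h0 : 0 ≤ t) (h1 : t ≤ 1) :
    FF (mix t J K) P ≤ (1 - t) * FF J P + t * FF K P := by
  have key : negEntY (mix t J K) ≤ (1 - t) * negEntY J + t * negEntY K := by
    unfold negEntY
    rw [Finset.mul_sum, Finset.mul_sum, ← Finset.sum_add_distrib]
    refine Finset.sum_le_sum fun y _ => ?_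
    have hs : ∑ x, mix t J K y x = (1 - t) * ∑ x, J y x + t * ∑ x, K y x := by
      simp only [mix, Finset.sum_add_distrib, Finset.mul_sum]
    have hc := Real.convexOn_mul_log.2
      (Set.mem_Ici.2 (Finset.sum_nonneg fun x (_ : x ∈ Finset.univ) => hJ.1 y x))
      (Set.mem_Ici.2 (Finset.sum_nonneg fun x (_ : x ∈ Finset.univ) => hK.1 y x))
      (show 0 ≤ 1 - t by linarith) h0 (by ring)
    simp only [smul_eq_mul] at hc
    rw [hs]
    exact hc
  have := lin_mix (fun y x => Real.log (P x y)) J K t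
  unfold FF
  rw [this]
  linarith

lemma continuous_D2_mix (J K : 𝓨 → 𝓧 → ℝ) (Q : 𝓧 → ℝ) :
    Continuous fun t => D2 (mix t J K) Q := by
  unfold D2 negEnt negEntY lin mix
  refine Continuous.sub (Continuous.sub ?_ ?_) ?_
  · refine continuous_finsetSum _ fun y _ => continuous_finsetSum _ fun x _ => ?_
    exact Real.continuous_mul_log.comp
      (g := fun s => s * Real.log s) (f := fun t => (1 - t) * J y x + t * K y x) (by fun_prop)
  · refine continuous_finsetSum _ fun y _ => ?_
    exact Real.continuous_mul_log.comp (g := fun s => s * Real.log s)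
      (f := fun t => ∑ x, ((1 - t) * J y x + t * K y x)) (by fun_prop)
  · fun_prop

/-! ### Mutual information and capacity -/

lemma MI_eq {Q : 𝓧 → ℝ} {P : 𝓧 → 𝓨 → ℝ} (hQ : ∀ x, 0 ≤ Q x) (hP : IsChannel P) :
    MI Q P = - FF (fun y x => Q x * P x y) P := by
  unfold MI FF negEntY lin
  rw [Finset.sum_comm, neg_sub, ← Finset.sum_sub_distrib]
  refine Finset.sum_congr rfl fun y _ => ?_
  rw [Finset.sum_mul, ← Finset.sum_sub_distrib]
  refine Finset.sum_congr rfl fun x _ => ?_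
  by_cases h : Q x * P x y = 0
  · simp [h]
  · have hpos : 0 < ∑ a, Q a * P a y :=
      Finset.sum_pos' (fun a _ => mul_nonneg (hQ a) ((hP a).1 y))
        ⟨x, Finset.mem_univ _, lt_of_le_of_ne (mul_nonneg (hQ x) ((hP x).1 y)) (Ne.symm h)⟩
    rw [if_neg h, Real.log_div (right_ne_zero_of_mul h) hpos.ne']
    ring

lemma continuous_FF (P : 𝓧 → 𝓨 → ℝ) :
    Continuous fun Q : 𝓧 → ℝ => FF (fun y x => Q x * P x y) P := by
  unfold FF negEntY lin
  refine Continuous.sub ?_ (by fun_prop)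
  refine continuous_finsetSum _ fun y _ => ?_
  exact Real.continuous_mul_log.comp (g := fun s => s * Real.log s)
      (f := fun Q : 𝓧 → ℝ => ∑ x, Q x * P x y) (by fun_prop)

/-- The capacity over a support is attained, by compactness of the simplex. -/
lemma exists_of_le_capacity {Q : 𝓧 → ℝ} {P : 𝓧 → 𝓨 → ℝ} {R : ℝ} (hQ : IsPMF Q)
    (hP : IsChannel P) (h : R ≤ capacity P {x | 0 < Q x}) :
    ∃ Q' : 𝓧 → ℝ, IsPMF Q' ∧ (∀ x, Q' x ≠ 0 → 0 < Q x) ∧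
      R + FF (fun y x => Q' x * P x y) P ≤ 0 := by
  let S : Set (𝓧 → ℝ) := stdSimplex ℝ 𝓧 ∩ {f | ∀ x, ¬ 0 < Q x → f x = 0}
  have hclosed : IsClosed {f : 𝓧 → ℝ | ∀ x, ¬ 0 < Q x → f x = 0} := by
    simp only [Set.ofPred_forall]
    exact isClosed_iInter fun x => isClosed_iInter fun _ =>
      isClosed_eq (continuous_apply x) continuous_const
  have hS : IsCompact S := (isCompact_stdSimplex ℝ 𝓧).inter_right hclosed
  have hQS : Q ∈ S := ⟨hQ, fun x hx => le_antisymm (not_lt.1 hx) (hQ.1 x)⟩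
  obtain ⟨Q', hQ', hmin⟩ := hS.exists_isMinOn ⟨Q, hQS⟩ (continuous_FF P).continuousOn
  refine ⟨Q', hQ'.1, fun x hx => by_contra fun hn => hx (hQ'.2 x hn), ?_⟩
  have hcap : capacity P {x | 0 < Q x} ≤ - FF (fun y x => Q' x * P x y) P := by
    refine csSup_le ⟨_, Q, hQ, fun x hx => hx, rfl⟩ ?_
    rintro c ⟨Q'', hQ'', hs, rfl⟩
    rw [MI_eq hQ''.1 hP]
    refine neg_le_neg (hmin (a := Q'') ⟨hQ'', fun x hx => ?_⟩)
    by_contra hne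
    exact hx (hs x (lt_of_le_of_ne (hQ''.1 x) (Ne.symm hne)))
  linarith

/-! ### Equality of the exponents -/

/-- If the capacity over `supp Q` is at least `R`, the two exponents agree: a joint distribution
violating the constraint is moved towards `Q'∘P`, `I(Q'∘P) ≥ R`, until the constraint is tight,
and convexity of `FF` bounds the cost there. -/
lemma Ec_eq_EcML [Nonempty 𝓧] {Q : 𝓧 → ℝ} {P : 𝓧 → 𝓨 → ℝ} {R : ℝ} (hQ : IsPMF Q)
    (hP : IsChannel P) (h : R ≤ capacity P {x | 0 < Q x}) : Ec R Q P = EcML R Q P := by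
  refine le_antisymm (le_sInf ?_) (EcML_le_Ec R Q P)
  rintro v ⟨T, V, hT, hV, rfl⟩
  by_cases hs : SuppIn (fun y x => T y * V y x) Q P
  swap
  · rw [DQP_eq_top hs, EReal.top_add_of_ne_bot]
    · exact le_top
    · exact (lt_of_lt_of_le EReal.bot_lt_zero (le_max_right _ _)).ne'
  rw [obj_eq R hV hs]
  have hJ := isJoint_mul hT hV
  generalize (fun y x => T y * V y x) = J at hs hJ
  rcases le_or_gt R (D2 J Q) with hR | hR
  · exact (Ec_le hJ hs hR).trans (by exact_mod_cast le_max_left _ _)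
  obtain ⟨Q', hQ', hsupp, hF⟩ := exists_of_le_capacity hQ hP h
  have hK := isJoint_QP hQ' hP
  have hKs := suppIn_QP P hsupp
  generalize (fun (y : 𝓨) x => Q' x * P x y) = K at hF hK hKs
  have hK0 := D1_nonneg hQ hP hK hKs
  have hK1 := D1_sub_D2 K Q P
  have m0 : mix 0 J K = J := by funext y x; simp [mix]
  have m1 : mix 1 J K = K := by funext y x; simp [mix]
  obtain ⟨t, ⟨ht0, ht1⟩, ht⟩ := intermediate_value_Icc (zero_le_one' ℝ)
    (continuous_D2_mix J K Q).continuousOn (show R ∈ Set.Icc _ _ from by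
      simp only [m0, m1]
      constructor <;> linarith)
  refine (Ec_le (isJoint_mix hJ hK ht0 ht1) (suppIn_mix hs hKs t) ht.ge).trans ?_
  have h1 := D1_sub_D2 (mix t J K) Q P
  have h2 := FF_mix_le P hJ hK ht0 ht1
  have h3 := D1_nonneg hQ hP hJ hs
  have h4 := D1_sub_D2 J Q P
  have h5 : t * (R + FF K P) ≤ 0 := mul_nonpos_of_nonneg_of_nonpos ht0 hF
  have h6 : 0 ≤ t * (R + FF J P) := mul_nonneg ht0 (by linarith)
  simp only at ht
  have : D1 (mix t J K) Q P ≤ R + FF J P := by nlinarith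
  exact_mod_cast this.trans (le_max_right _ _)

/-! ### Passing to the input marginal -/

lemma lin_marginal (J : 𝓨 → 𝓧 → ℝ) (w : 𝓧 → ℝ) :
    lin (fun _ x => w x) J = ∑ x, (∑ y, J y x) * w x := by
  unfold lin
  rw [Finset.sum_comm]
  simp only [Finset.sum_mul]

lemma isPMF_marginal {J : 𝓨 → 𝓧 → ℝ} (hJ : IsJoint J) : IsPMF (fun x => ∑ y, J y x) :=
  ⟨fun x => Finset.sum_nonneg fun y _ => hJ.1 y x, by rw [Finset.sum_comm]; exact hJ.2⟩

lemma marginal_ne_zero {J : 𝓨 → 𝓧 → ℝ} (hJ : IsJoint J) {y : 𝓨} {x : 𝓧} (h : J y x ≠ 0) :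
    ∑ y, J y x ≠ 0 := fun h0 =>
  h ((Finset.sum_eq_zero_iff_of_nonneg fun y _ => hJ.1 y x).1 h0 y (Finset.mem_univ _))

/-- Replacing `Q` by the `𝓧`-marginal of a feasible `J` does not increase the objective. -/
lemma EcML_marginal_le [Nonempty 𝓧] {J : 𝓨 → 𝓧 → ℝ} {Q : 𝓧 → ℝ} {P : 𝓧 → 𝓨 → ℝ} {R : ℝ}
    (hQ : IsPMF Q) (hJ : IsJoint J) (hs : SuppIn J Q P) (hR : R ≤ D2 J Q) :
    EcML R (fun x => ∑ y, J y x) P ≤ (D1 J Q P : EReal) := by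
  refine (EcML_le R hJ (Q := fun x => ∑ y, J y x)
    fun y x hne => ⟨marginal_ne_zero hJ hne, (hs y x hne).2⟩).trans ?_
  have h1 := D1_sub_D2 J Q P
  have h2 := gibbs (isPMF_marginal hJ) hQ fun x hx => by
    refine Finset.sum_eq_zero fun y _ => ?_
    by_contra hne
    exact (hs y x hne).1 hx
  rw [← lin_marginal J (fun x => Real.log (Q x)),
    ← lin_marginal J (fun x => Real.log (∑ y, J y x))] at h2
  refine EReal.coe_le_coe_iff.2 (max_le ?_ (by linarith))
  unfold D1
  linarith

/-! ### The descent inequality -/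

/-- First-order optimality of `J` against the direction of `Q'∘P`, at positive step `t`. -/
lemma step_aux {J : 𝓨 → 𝓧 → ℝ} {Q Q' : 𝓧 → ℝ} {P : 𝓧 → 𝓨 → ℝ}
    (hP : IsChannel P) (hJ : IsJoint J) (hQ' : IsPMF Q') {t : ℝ} (ht0 : 0 < t) (ht1 : t < 1)
    (hopt : D1 J Q P ≤ D1 (mix t J (fun y x => Q' x * P x y)) Q P) :
    D1 J Q P ≤
      ∑ x, Q' x * (Real.log ((1 - t) * (∑ y, J y x) + t * Q' x) - Real.log (Q x)) := by
  have hK := isJoint_QP hQ' hP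
  set K : 𝓨 → 𝓧 → ℝ := fun y x => Q' x * P x y with hKdef
  have hM := isJoint_mix hJ hK ht0.le ht1.le
  set M := mix t J K with hMdef
  have hJM : ∀ y x, M y x = 0 → J y x = 0 := fun y x h => by
    have h1 : 0 ≤ (1 - t) * J y x := mul_nonneg (by linarith) (hJ.1 y x)
    have h2 : 0 ≤ t * K y x := mul_nonneg ht0.le (hK.1 y x)
    have h3 : (1 - t) * J y x + t * K y x = 0 := h
    exact (mul_eq_zero.1 (show (1 - t) * J y x = 0 by linarith)).resolve_left (by linarith)
  have g1 := gibbs_joint hJ hM hJM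
  have e1 : negEnt M = (1 - t) * lin (fun y x => Real.log (M y x)) J +
      t * lin (fun y x => Real.log (M y x)) K := lin_mix _ J K t
  have e2 := lin_mix (fun _ x => Real.log (Q x)) J K t
  have e3 := lin_mix (fun y x => Real.log (P x y)) J K t
  have hm : ∀ x, ∑ y, M y x = (1 - t) * (∑ y, J y x) + t * Q' x := fun x => by
    simp only [hMdef, hKdef, mix, Finset.sum_add_distrib, ← Finset.mul_sum, (hP x).2, mul_one]
  -- Dividing the optimality inequality by `t` isolates the directional term.
  have main : D1 J Q P ≤ lin (fun y x => Real.log (M y x)) K -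
      lin (fun _ x => Real.log (Q x)) K - lin (fun y x => Real.log (P x y)) K := by
    unfold D1 at hopt ⊢
    rw [← hMdef] at e2 e3
    rw [e1, e2, e3] at hopt
    have := mul_le_mul_of_nonneg_left g1 (show 0 ≤ 1 - t by linarith)
    refine le_of_mul_le_mul_left ?_ ht0
    linarith
  have margK : ∀ w : 𝓧 → ℝ, lin (fun _ x => w x) K = ∑ x, Q' x * w x := fun w => by
    rw [lin_marginal]
    simp only [hKdef, ← Finset.mul_sum, (hP _).2, mul_one]
  -- Data processing: passing to the `𝓧`-marginals.
  have dp : lin (fun y x => Real.log (M y x)) K - lin (fun y x => Real.log (P x y)) K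
      ≤ lin (fun _ x => Real.log (∑ y, M y x)) K := by
    have hle : ∀ x, ∑ y, (K y x * Real.log (M y x) - K y x * Real.log (P x y)
        - K y x * Real.log (∑ y, M y x)) ≤ 0 := fun x => by
      rcases (hQ'.1 x).eq_or_lt with h0 | h0
      · simp [hKdef, ← h0]
      have hs : 0 < ∑ y, M y x := by
        rw [hm]
        have := Finset.sum_nonneg fun y (_ : y ∈ Finset.univ) => hJ.1 y x
        have := mul_nonneg (show 0 ≤ 1 - t by linarith) this
        have := mul_pos ht0 h0
        linarith
      have hterm : ∀ y ∈ Finset.univ, K y x * Real.log (M y x) - K y x * Real.log (P x y)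
          - K y x * Real.log (∑ y, M y x) ≤ Q' x * (M y x / ∑ y, M y x) - K y x := fun y _ => by
        rcases (hK.1 y x).eq_or_lt with hk | hk
        · rw [← hk]
          have := mul_nonneg h0.le (div_nonneg (hM.1 y x) hs.le)
          simpa using this
        · have hp : 0 < P x y := pos_of_mul_pos_right hk h0.le
          have hMp : 0 < M y x := by
            have h1 := mul_nonneg (show 0 ≤ 1 - t by linarith) (hJ.1 y x)
            have h2 := mul_pos ht0 hk
            show 0 < (1 - t) * J y x + t * K y x
            linarith
          have hl := Real.log_le_sub_one_of_pos (div_pos hMp (mul_pos hp hs))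
          rw [Real.log_div hMp.ne' (mul_pos hp hs).ne', Real.log_mul hp.ne' hs.ne'] at hl
          have := mul_le_mul_of_nonneg_left hl hk.le
          have he : K y x * (M y x / (P x y * ∑ y, M y x) - 1) =
              Q' x * (M y x / ∑ y, M y x) - K y x := by
            simp only [hKdef]
            field_simp
          nlinarith
      refine (Finset.sum_le_sum hterm).trans ?_
      rw [Finset.sum_sub_distrib, ← Finset.mul_sum, ← Finset.sum_div, div_self hs.ne']
      simp only [hKdef, ← Finset.mul_sum, (hP x).2]
      simp
    have hsum := Finset.sum_nonpos fun x (_ : x ∈ Finset.univ) => hle x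
    rw [Finset.sum_comm] at hsum
    simp only [Finset.sum_sub_distrib] at hsum
    unfold lin
    linarith
  rw [margK] at main dp
  simp only [mul_sub, Finset.sum_sub_distrib, ← hm]
  linarith

/-- The descent inequality: one iteration with positive exponent `D1 J Q P` increases
`∑ Q' log Q` by at least that exponent, for any `Q'` whose mutual information is at least `R` and
whose support lies in those of `Q` and of the input marginal of `J`. -/
lemma step [Nonempty 𝓧] {J : 𝓨 → 𝓧 → ℝ} {Q Q' : 𝓧 → ℝ} {P : 𝓧 → 𝓨 → ℝ} {R : ℝ}
    (hP : IsChannel P) (hJ : IsJoint J) (hs : SuppIn J Q P) (hR : R ≤ D2 J Q)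
    (hmin : (D1 J Q P : EReal) ≤ EcML R Q P) (hpos : 0 < D1 J Q P)
    (hQ' : IsPMF Q') (hsupp : ∀ x, Q' x ≠ 0 → 0 < Q x)
    (hsupp' : ∀ x, Q' x ≠ 0 → ∑ y, J y x ≠ 0)
    (hF : R + FF (fun y x => Q' x * P x y) P ≤ 0) :
    D1 J Q P ≤ ∑ x, Q' x * Real.log (∑ y, J y x) - ∑ x, Q' x * Real.log (Q x) := by
  have hK := isJoint_QP hQ' hP
  have hKs := suppIn_QP P hsupp
  have hstep : ∀ t ∈ Set.Ioo (0 : ℝ) 1, D1 J Q P ≤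
      ∑ x, Q' x * (Real.log ((1 - t) * (∑ y, J y x) + t * Q' x) - Real.log (Q x)) := by
    rintro t ⟨ht0, ht1⟩
    refine step_aux hP hJ hQ' ht0 ht1 ?_
    have h1 := hmin.trans
      (EcML_le R (isJoint_mix hJ hK ht0.le ht1.le) (suppIn_mix hs hKs t))
    have h2 := EReal.coe_le_coe_iff.1 h1
    -- The second branch of the maximum is strictly below the optimum, so the first is active.
    rcases le_max_iff.1 h2 with h3 | h3
    · exact h3
    · exfalso
      have h4 := FF_mix_le P hJ hK ht0.le ht1.le
      have h5 := D1_sub_D2 J Q P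
      have h6 := mul_nonpos_of_nonneg_of_nonpos ht0.le hF
      have h7 := mul_le_mul_of_nonneg_left (show R + FF J P ≤ D1 J Q P by linarith)
        (show 0 ≤ 1 - t by linarith)
      have h8 := mul_pos ht0 hpos
      nlinarith
  have hlim : Tendsto (fun t : ℝ =>
      ∑ x, Q' x * (Real.log ((1 - t) * (∑ y, J y x) + t * Q' x) - Real.log (Q x)))
      (𝓝[>] 0) (𝓝 (∑ x, Q' x * (Real.log (∑ y, J y x) - Real.log (Q x)))) := by
    refine tendsto_finsetSum _ fun x _ => ?_
    by_cases h0 : Q' x = 0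
    · simp [h0]
    refine Tendsto.const_mul _ (Tendsto.sub_const ?_ _)
    refine Tendsto.log ?_ (hsupp' x h0)
    have hc : Continuous fun t : ℝ => (1 - t) * (∑ y, J y x) + t * Q' x := by fun_prop
    have := hc.tendsto 0
    simp only [sub_zero, one_mul, zero_mul, add_zero] at this
    exact this.mono_left nhdsWithin_le_nhds
  have := ge_of_tendsto hlim
    (Filter.mem_of_superset (Ioo_mem_nhdsGT (zero_lt_one' ℝ)) hstep)
  simpa only [mul_sub, Finset.sum_sub_distrib] using this

end Aux

/-! ### The iteration -/

theorem stmt_17 {𝓧 𝓨 : Type*} [Fintype 𝓧] [Fintype 𝓨] [Nonempty 𝓧] [Nonempty 𝓨]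
    (P : 𝓧 → 𝓨 → ℝ) (hP : IsChannel P) (R : ℝ)
    (Qs : ℕ → 𝓧 → ℝ) (Ts : ℕ → 𝓨 → ℝ) (Vs : ℕ → 𝓨 → 𝓧 → ℝ)
    (hQ0 : IsPMF (Qs 0))
    (hinit : EcML R (Qs 0) P
      < sInf {v | ∃ Q' : 𝓧 → ℝ, IsPMF Q' ∧ capacity P {x | 0 < Q' x} < R ∧
          v = EcML R Q' P})
    (hTs : ∀ ℓ, IsPMF (Ts ℓ)) (hVs : ∀ ℓ, IsCondPMF (Vs ℓ))
    (hmin : ∀ ℓ, (R : EReal) ≤ DTQ (Ts ℓ) (Vs ℓ) (Qs ℓ)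
      ∧ DQP (Ts ℓ) (Vs ℓ) (Qs ℓ) P = Ec R (Qs ℓ) P)
    (hrec : ∀ ℓ x, Qs (ℓ + 1) x = ∑ y, Ts ℓ y * Vs ℓ y x) :
    (∀ ℓ, Ec R (Qs ℓ) P = EcML R (Qs ℓ) P)
    ∧ Antitone (fun ℓ => Ec R (Qs ℓ) P)
    ∧ Tendsto (fun ℓ => Ec R (Qs ℓ) P) atTop (𝓝 (0 : EReal)) := by
  have hjoint : ∀ ℓ, IsJoint (fun y x => Ts ℓ y * Vs ℓ y x) := fun ℓ =>
    isJoint_mul (hTs ℓ) (hVs ℓ)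
  have hQnext : ∀ ℓ, Qs (ℓ + 1) = fun x => ∑ y, Ts ℓ y * Vs ℓ y x := fun ℓ => funext (hrec ℓ)
  have hcap : ∀ Q, IsPMF Q → EcML R Q P < sInf {v | ∃ Q' : 𝓧 → ℝ, IsPMF Q' ∧
      capacity P {x | 0 < Q' x} < R ∧ v = EcML R Q' P} → R ≤ capacity P {x | 0 < Q x} := by
    intro Q hQ hlt
    by_contra hn
    exact absurd hlt (not_lt.2 (sInf_le ⟨Q, hQ, not_le.1 hn, rfl⟩))
  -- One iteration, from the two properties that are propagated along the sequence.
  have hone : ∀ ℓ, IsPMF (Qs ℓ) → EcML R (Qs ℓ) P < sInf {v | ∃ Q' : 𝓧 → ℝ, IsPMF Q' ∧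
      capacity P {x | 0 < Q' x} < R ∧ v = EcML R Q' P} →
      SuppIn (fun y x => Ts ℓ y * Vs ℓ y x) (Qs ℓ) P ∧
      Ec R (Qs ℓ) P = (D1 (fun y x => Ts ℓ y * Vs ℓ y x) (Qs ℓ) P : ℝ) ∧
      R ≤ D2 (fun y x => Ts ℓ y * Vs ℓ y x) (Qs ℓ) ∧
      EcML R (Qs (ℓ + 1)) P ≤ EcML R (Qs ℓ) P := by
    intro ℓ hQ hlt
    have heq := Ec_eq_EcML hQ hP (hcap _ hQ hlt)
    have hs : SuppIn (fun y x => Ts ℓ y * Vs ℓ y x) (Qs ℓ) P := by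
      by_contra hn
      have h1 := (hmin ℓ).2
      rw [DQP_eq_top hn, heq] at h1
      rw [← h1] at hlt
      exact not_top_lt hlt
    have hE : Ec R (Qs ℓ) P = (D1 (fun y x => Ts ℓ y * Vs ℓ y x) (Qs ℓ) P : ℝ) := by
      rw [← (hmin ℓ).2, DQP_eq hs]
    have hR : R ≤ D2 (fun y x => Ts ℓ y * Vs ℓ y x) (Qs ℓ) := by
      have := (hmin ℓ).1
      rw [DTQ_eq (hVs ℓ) hs] at this
      exact_mod_cast this
    refine ⟨hs, hE, hR, ?_⟩
    rw [← heq, hE, hQnext]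
    exact EcML_marginal_le hQ (hjoint ℓ) hs hR
  have hinv : ∀ ℓ, IsPMF (Qs ℓ) ∧ EcML R (Qs ℓ) P < sInf {v | ∃ Q' : 𝓧 → ℝ, IsPMF Q' ∧
      capacity P {x | 0 < Q' x} < R ∧ v = EcML R Q' P} := by
    intro ℓ
    induction ℓ with
    | zero => exact ⟨hQ0, hinit⟩
    | succ ℓ ih =>
      refine ⟨?_, (hone ℓ ih.1 ih.2).2.2.2.trans_lt ih.2⟩
      rw [hQnext]
      exact isPMF_marginal (hjoint ℓ)
  have heq : ∀ ℓ, Ec R (Qs ℓ) P = EcML R (Qs ℓ) P := fun ℓ =>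
    Ec_eq_EcML (hinv ℓ).1 hP (hcap _ (hinv ℓ).1 (hinv ℓ).2)
  have hanti : Antitone (fun ℓ => Ec R (Qs ℓ) P) := antitone_nat_of_succ_le fun ℓ => by
    rw [heq, heq]
    exact (hone ℓ (hinv ℓ).1 (hinv ℓ).2).2.2.2
  refine ⟨heq, hanti, ?_⟩
  set e : ℕ → ℝ := fun ℓ => D1 (fun y x => Ts ℓ y * Vs ℓ y x) (Qs ℓ) P with he
  have hEe : ∀ ℓ, Ec R (Qs ℓ) P = (e ℓ : EReal) := fun ℓ => (hone ℓ (hinv ℓ).1 (hinv ℓ).2).2.1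
  have hsuppin : ∀ ℓ, SuppIn (fun y x => Ts ℓ y * Vs ℓ y x) (Qs ℓ) P := fun ℓ =>
    (hone ℓ (hinv ℓ).1 (hinv ℓ).2).1
  have he0 : ∀ ℓ, 0 ≤ e ℓ := fun ℓ => D1_nonneg (hinv ℓ).1 hP (hjoint ℓ) (hsuppin ℓ)
  have heanti : Antitone e := fun a b hab => by
    have h1 : Ec R (Qs b) P ≤ Ec R (Qs a) P := hanti hab
    rw [hEe, hEe] at h1
    exact EReal.coe_le_coe_iff.1 h1
  -- The supports decrease, hence stabilise from some index `N` on.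
  have hsub : Antitone fun ℓ => {x | Qs ℓ x ≠ 0} := antitone_nat_of_succ_le fun ℓ x hx hq => by
    refine hx ?_
    rw [hrec]
    refine Finset.sum_eq_zero fun y _ => ?_
    by_contra hne
    exact (hsuppin ℓ y x hne).1 hq
  obtain ⟨N, hN⟩ : ∃ N, ∀ ℓ, N ≤ ℓ → {x | Qs N x ≠ 0} = {x | Qs ℓ x ≠ 0} := by
    obtain ⟨N, hN⟩ := WellFoundedGT.monotone_chain_condition
      (α := (Set 𝓧)ᵒᵈ) ⟨fun ℓ => OrderDual.toDual {x | Qs ℓ x ≠ 0}, fun a b hab => hsub hab⟩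
    exact ⟨N, fun ℓ hℓ => hN ℓ hℓ⟩
  obtain ⟨Q', hQ', hsupp, hF⟩ := exists_of_le_capacity (hinv N).1 hP
    (hcap _ (hinv N).1 (hinv N).2)
  have hne : ∀ ℓ, N ≤ ℓ → ∀ x, Q' x ≠ 0 → Qs ℓ x ≠ 0 := fun ℓ hℓ x hx => by
    have : x ∈ {x | Qs N x ≠ 0} := (hsupp x hx).ne'
    rw [hN ℓ hℓ] at this
    exact this
  have hdesc : ∀ ℓ, N ≤ ℓ → 0 < e ℓ → e ℓ ≤
      ∑ x, Q' x * Real.log (Qs (ℓ + 1) x) - ∑ x, Q' x * Real.log (Qs ℓ x) := by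
    intro ℓ hℓ hpos
    have h := step hP (hjoint ℓ) (hsuppin ℓ) (hone ℓ (hinv ℓ).1 (hinv ℓ).2).2.2.1
      (by rw [← heq, hEe]) hpos hQ'
      (fun x hx => lt_of_le_of_ne ((hinv ℓ).1.1 x) (Ne.symm (hne ℓ hℓ x hx)))
      (fun x hx => by rw [← hrec]; exact hne (ℓ + 1) (by omega) x hx) hF
    simp only [← hrec] at h
    exact h
  have hΦ : ∀ ℓ, ∑ x, Q' x * Real.log (Qs ℓ x) ≤ 0 := fun ℓ =>
    Finset.sum_nonpos fun x _ => mul_nonpos_of_nonneg_of_nonpos (hQ'.1 x) <| by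
      refine Real.log_nonpos ((hinv ℓ).1.1 x) ?_
      rw [← (hinv ℓ).1.2]
      exact Finset.single_le_sum (fun a _ => (hinv ℓ).1.1 a) (Finset.mem_univ x)
  have hlim : Tendsto e atTop (𝓝 0) := by
    rw [Metric.tendsto_atTop]
    intro ε hε
    by_contra hcon
    push Not at hcon
    have hall : ∀ ℓ, ε ≤ e ℓ := fun ℓ => by
      obtain ⟨n, hn, h⟩ := hcon ℓ
      rw [Real.dist_eq, sub_zero, abs_of_nonneg (he0 n)] at h
      exact h.trans (heanti hn)
    have hgrow : ∀ n : ℕ, ∑ x, Q' x * Real.log (Qs N x) + n * ε ≤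
        ∑ x, Q' x * Real.log (Qs (N + n) x) := by
      intro n
      induction n with
      | zero => simp
      | succ n ih =>
        have h1 := hdesc (N + n) (by omega) (hε.trans_le (hall _))
        have h2 := hall (N + n)
        rw [← add_assoc]
        push_cast
        linarith
    obtain ⟨n, hn⟩ := exists_nat_gt ((-∑ x, Q' x * Real.log (Qs N x)) / ε)
    rw [div_lt_iff₀ hε] at hn
    have h1 := hgrow n
    have h2 := hΦ (N + n)
    linarith
  simp only [hEe]
  exact_mod_cast (continuous_coe_real_ereal.tendsto 0).comp hlim
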